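/- W is the disjoint union, over w ∈ W^J, of the sets W_J ·_δ (w W_{I(J,w,δ)}): every element of W lies in W_J ·_δ (w W_{I(J,w,δ)}) for some w ∈ W^J, and for distinct w, w' ∈ W^J the sets W_J ·_δ (w W_{I(J,w,δ)}) and W_J ·_δ (w' W_{I(J,w',δ)}) are disjoint. -/

import Mathlib

open CoxeterSystem

variable {B : Type*} [Finite B] {W : Type*} [Group W] {M : CoxeterMatrix B}

namespace PartialConjugation

/-- The standard parabolic subgroup `W_J` of `W`, generated by the simple
reflections indexed by `J`. -/
def parab (cs : CoxeterSystem M W) (J : Set B) : Subgroup W :=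
  Subgroup.closure (cs.simple '' J)

/-- The simple reflection `s_j` (for `j ∈ J`), viewed as an element of `W_J`. -/
def sJ (cs : CoxeterSystem M W) (J : Set B) (j : B) (hj : j ∈ J) : parab cs J :=
  ⟨cs.simple j, Subgroup.subset_closure ⟨j, hj, rfl⟩⟩

/-- `w ∈ W^J`: `w` is a minimal length representative of its left coset `w W_J`. -/
def IsMinRep (cs : CoxeterSystem M W) (J : Set B) (w : W) : Prop :=
  ∀ v ∈ parab cs J, cs.length w ≤ cs.length (w * v)

variable (cs : CoxeterSystem M W) (J J' : Set B) (δ : parab cs J ≃* parab cs J')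

/-- `δ` carries the set of simple reflections indexed by `J` onto the set of
simple reflections indexed by `J'`. -/
def MapsSimples : Prop :=
  (∀ j, ∀ hj : j ∈ J, ∃ j' ∈ J', (δ (sJ cs J j hj) : W) = cs.simple j') ∧
  (∀ j' ∈ J', ∃ j, ∃ hj : j ∈ J, (δ (sJ cs J j hj) : W) = cs.simple j')

/-- `K` is a `w`-special subset of `J`. -/
def WSpecial (w : W) (K : Set B) : Prop :=
  K ⊆ J ∧ ∀ k ∈ K, ∃ j, ∃ hjJ : j ∈ J, j ∈ K ∧
    w * cs.simple k * w⁻¹ = (δ (sJ cs J j hjJ) : W)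

/-- The set `I(J, w, δ)`: the union of all `w`-special subsets of `J`. -/
def Iset (w : W) : Set B := ⋃₀ {K | WSpecial cs J J' δ w K}

/-- The set `W_J ·_δ V = {δ(u) v u⁻¹ : u ∈ W_J, v ∈ V}`. -/
def orbSet (V : Set W) : Set W :=
  {x | ∃ u : parab cs J, ∃ v ∈ V, x = (δ u : W) * v * (u : W)⁻¹}

/-- The orbit of `x` under the `δ`-twisted partial conjugation action of `W_J`. -/
def orbitOf (x : W) : Set W := orbSet cs J J' δ {x}

/-- The coset `w W_{I(J,w,δ)}`. -/
def coset (w : W) : Set W :=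
  {x | ∃ v ∈ parab cs (Iset cs J J' δ w), x = w * v}

/-- Elementary step `v →_i v'` of `δ`-twisted conjugation: `v' = δ(s_i) v s_i`
with `i ∈ J` and `ℓ(v') ≤ ℓ(v)`. -/
def StepRel (v v' : W) : Prop :=
  ∃ i, ∃ hi : i ∈ J, v' = (δ (sJ cs J i hi) : W) * v * cs.simple i ∧
    cs.length v' ≤ cs.length v

/-- The relation `v →_{J,δ} v'`. -/
def ToRel : W → W → Prop := Relation.ReflTransGen (StepRel cs J J' δ)

/-- The relation `v ≈_{J,δ} v'`. -/
def Approx (v v' : W) : Prop := ToRel cs J J' δ v v' ∧ ToRel cs J J' δ v' v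

/-- The Bruhat order on `W`. -/
def bruhatLE (cs : CoxeterSystem M W) : W → W → Prop :=
  Relation.ReflTransGen
    (fun a b => ∃ t, cs.IsReflection t ∧ b = a * t ∧ cs.length a < cs.length b)

/-- The set of minimal length elements in the orbit of `x`. -/
def orbMin (x : W) : Set W :=
  {y ∈ orbitOf cs J J' δ x | ∀ z ∈ orbitOf cs J J' δ x, cs.length y ≤ cs.length z}

/-!
By the exchange condition, left multiplication of `w ∈ W^J` by a simple reflection either stays in
`W^J` or is right multiplication by some `s_j`, `j ∈ J` (Deodhar). Both halves apply this dichotomy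
to `δ(u) w`, where `w ∈ W^J` and `u ∈ W_J`.

Covering. Among the elements `w s_{i₁} ⋯ s_{iₙ}` of the orbit of `x`, with `w ∈ W^J` and all
`iₖ ∈ J`, choose one with `n` minimal. Conjugating by the last letter must move that letter through
`w` to the front of the word, since otherwise `n` would drop. So every letter can be rotated, the
letters of all shortest words with this `w` form a `w`-special set, and the orbit meets
`w W_{I(J,w,δ)}`.

Disjointness. If orbits of `w W_K` and `w' W_{K'}` meet, where `K` and `K'` are special, choose
`u` of minimal length with `δ(u) w v = w' v' u` for some `v ∈ W_K` and `v' ∈ W_{K'}`. Then `u` is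
minimal in `W_{K'} u W_K`. Write `δ(u) w = w₁ a` with `w₁ ∈ W^J` and `a ∈ W_J`; here
`ℓ(a) ≤ ℓ(u)`, with equality only if `w₁ = w`. Uniqueness of the coset decomposition gives
`w₁ = w'` and `a v = v' u`, hence `ℓ(v') ≤ ℓ(v)`. By symmetry `ℓ(v) = ℓ(v')`, so `ℓ(a) = ℓ(u)` and
`w = w'`.
-/

section

omit [Finite B]

variable {cs J J' δ}

/-! ### The exchange condition -/

section Exchange

variable (cs) in
/-- The action of the simple reflection `s_i` on `W × ℤ/2`, conjugating the first component and
changing the sign in the second one at `s_i`. Its extension to `W` records the parity of the number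
of times that `t` occurs in the right inversion sequence of a word. -/
def signedConj [DecidableEq W] (i : B) : Function.End (W × ZMod 2) :=
  fun p ↦ (cs.simple i * p.1 * cs.simple i, p.2 + if p.1 = cs.simple i then 1 else 0)

theorem prod_map_signedConj_apply [DecidableEq W] (ω : List B) (t : W) (e : ZMod 2) :
    (ω.map (signedConj cs)).prod (t, e) =
      (cs.wordProd ω * t * (cs.wordProd ω)⁻¹, e + (cs.rightInvSeq ω).count t) := by
  induction ω with
  | nil => simp [Function.End.one_def]
  | cons i ω ih =>
    have hiff : cs.wordProd ω * t * (cs.wordProd ω)⁻¹ = cs.simple i ↔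
        (cs.wordProd ω)⁻¹ * cs.simple i * cs.wordProd ω = t := by
      rw [mul_inv_eq_iff_eq_mul, mul_assoc, inv_mul_eq_iff_eq_mul, eq_comm]
    change signedConj cs i ((ω.map (signedConj cs)).prod (t, e)) = _
    rw [ih, signedConj]
    simp only [hiff]
    simp [rightInvSeq, List.count_cons, cs.wordProd_cons, mul_assoc, add_assoc]

theorem prod_map_signedConj_reverse_alternatingWord [DecidableEq W] (i j : B) (m : ℕ) :
    ((alternatingWord j i (2 * m)).reverse.map (signedConj cs)).prod =
      (signedConj cs i * signedConj cs j) ^ m := by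
  induction m with
  | zero => rfl
  | succ m ih =>
    rw [mul_add_one, alternatingWord_succ, alternatingWord_succ, pow_succ', ← ih]
    simp [mul_assoc]

theorem exists_leftInvSeq_alternatingWord_eq_append (i j : B) :
    ∃ L, cs.leftInvSeq (alternatingWord i j (2 * M i j)) = L ++ L := by
  have hperiod (k : ℕ) : cs.wordProd (alternatingWord j i (2 * (M i j + k) + 1)) =
      cs.wordProd (alternatingWord j i (2 * k + 1)) := by
    have hhalf (n : ℕ) : (2 * n + 1) / 2 = n := by lia
    simp [cs.prod_alternatingWord_eq_mul_pow, hhalf, pow_add]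
  have hmap : cs.leftInvSeq (alternatingWord i j (2 * M i j)) =
      (List.range (M i j + M i j)).map
        fun k ↦ cs.wordProd (alternatingWord j i (2 * k + 1)) := by
    refine List.ext_getElem (by simp [two_mul]) fun k hk _ ↦ ?_
    rw [cs.getElem_leftInvSeq_alternatingWord i j _ k (by simpa using hk)]
    simp
  refine ⟨(List.range (M i j)).map fun k ↦ cs.wordProd (alternatingWord j i (2 * k + 1)), ?_⟩
  simp only [hmap, List.range_add, List.map_append, List.map_map, Function.comp_def, hperiod]

theorem isLiftable_signedConj [DecidableEq W] : M.IsLiftable (signedConj cs) := by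
  intro i j
  funext ⟨t, e⟩
  obtain ⟨L, hL⟩ := exists_leftInvSeq_alternatingWord_eq_append (cs := cs) j i
  rw [← prod_map_signedConj_reverse_alternatingWord, prod_map_signedConj_apply,
    cs.rightInvSeq_reverse, List.count_reverse, M.symmetric i j, hL, List.count_append,
    Nat.cast_add, CharTwo.add_self_eq_zero, cs.wordProd_reverse,
    cs.prod_alternatingWord_eq_mul_pow]
  simp [Function.End.one_def]

theorem natCast_count_rightInvSeq_congr [DecidableEq W] {ω ω' : List B}
    (h : cs.wordProd ω = cs.wordProd ω') (t : W) :
    ((cs.rightInvSeq ω).count t : ZMod 2) = (cs.rightInvSeq ω').count t := by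
  have hlift (ω : List B) : cs.lift ⟨signedConj cs, isLiftable_signedConj⟩ (cs.wordProd ω) =
      (ω.map (signedConj cs)).prod := by
    rw [wordProd, map_list_prod, List.map_map]
    exact congrArg List.prod (List.map_congr_left fun i _ ↦ cs.lift_apply_simple _ i)
  have hprod : (ω.map (signedConj cs)).prod (t, 0) = (ω'.map (signedConj cs)).prod (t, 0) := by
    rw [← hlift, ← hlift, h]
  simpa [prod_map_signedConj_apply] using congrArg Prod.snd hprod

theorem simple_mem_rightInvSeq {ω : List B} {j : B} (h : cs.IsRightDescent (cs.wordProd ω) j) :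
    cs.simple j ∈ cs.rightInvSeq ω := by
  classical
  obtain ⟨ω', hω', hprod⟩ := cs.exists_isReduced (cs.wordProd ω * cs.simple j)
  have hnot : cs.simple j ∉ cs.rightInvSeq ω' := fun hmem ↦ by
    have hlt := (cs.isRightInversion_of_mem_rightInvSeq hω' hmem).2
    rw [← hprod, cs.simple_mul_simple_cancel_right] at hlt
    exact lt_asymm h hlt
  have hconj : cs.simple j ∉ (cs.rightInvSeq ω').map (MulAut.conj (cs.simple j)) := by
    rw [List.mem_map]
    rintro ⟨t, ht, hconj⟩
    have : t = cs.simple j := by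
      simpa [mul_assoc, mul_eq_one_iff_eq_inv] using hconj
    exact hnot (this ▸ ht)
  have hcount := natCast_count_rightInvSeq_congr (cs := cs) (ω := ω) (ω' := ω'.concat j)
    (by rw [cs.wordProd_concat, ← hprod, cs.simple_mul_simple_cancel_right]) (cs.simple j)
  rw [cs.rightInvSeq_concat, List.concat_eq_append, List.count_append,
    List.count_eq_zero.2 hconj, List.count_singleton_self] at hcount
  by_contra hmem
  simp [List.count_eq_zero.2 hmem] at hcount

theorem exists_wordProd_mul_simple_eq_eraseIdx {ω : List B} {j : B}
    (h : cs.IsRightDescent (cs.wordProd ω) j) :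
    ∃ k < ω.length, cs.wordProd ω * cs.simple j = cs.wordProd (ω.eraseIdx k) := by
  obtain ⟨k, hk, hget⟩ := List.mem_iff_getElem.1 (simple_mem_rightInvSeq h)
  refine ⟨k, by simpa using hk, ?_⟩
  rw [← cs.wordProd_mul_getD_rightInvSeq, List.getD_eq_getElem _ _ hk, hget]

theorem length_wordProd_eraseIdx_lt {ω : List B} (hω : cs.IsReduced ω) {k : ℕ}
    (hk : k < ω.length) : cs.length (cs.wordProd (ω.eraseIdx k)) < cs.length (cs.wordProd ω) :=
  calc cs.length (cs.wordProd (ω.eraseIdx k))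
    _ ≤ (ω.eraseIdx k).length := cs.length_wordProd_le _
    _ < ω.length := by rw [← List.length_eraseIdx_add_one hk]; exact Nat.lt_add_one _
    _ = cs.length (cs.wordProd ω) := hω.eq.symm

theorem isRightDescent_or_length_mul_conj_lt {a b : W} {j : B} (h : cs.IsRightDescent (a * b) j) :
    cs.IsRightDescent b j ∨ cs.length (a * (b * cs.simple j * b⁻¹)) < cs.length a := by
  obtain ⟨ω, hω, rfl⟩ := cs.exists_isReduced a
  obtain ⟨ω', hω', rfl⟩ := cs.exists_isReduced b
  rw [← cs.wordProd_append] at h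
  obtain ⟨k, hk, heq⟩ := exists_wordProd_mul_simple_eq_eraseIdx h
  rw [cs.wordProd_append, mul_assoc] at heq
  rcases lt_or_ge k ω.length with hkω | hkω
  · right
    rw [List.eraseIdx_append_of_lt_length hkω, cs.wordProd_append] at heq
    rw [← mul_assoc, heq, mul_inv_cancel_right]
    exact length_wordProd_eraseIdx_lt hω hkω
  · left
    rw [List.eraseIdx_append_of_length_le hkω, cs.wordProd_append, mul_right_inj] at heq
    rw [IsRightDescent, heq]
    exact length_wordProd_eraseIdx_lt hω' (by rw [List.length_append] at hk; lia)

end Exchange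

/-! ### Parabolic subgroups and minimal coset representatives -/

section Parabolic

theorem simple_mem_parab {j : B} (hj : j ∈ J) : cs.simple j ∈ parab cs J :=
  Subgroup.subset_closure ⟨j, hj, rfl⟩

theorem parab_mono {K : Set B} (h : K ⊆ J) : parab cs K ≤ parab cs J :=
  Subgroup.closure_mono (Set.image_mono h)

theorem wordProd_mem_parab {L : List B} (hL : ∀ i ∈ L, i ∈ J) : cs.wordProd L ∈ parab cs J :=
  Subgroup.list_prod_mem _ (by simpa using fun i hi ↦ simple_mem_parab (hL i hi))

@[elab_as_elim]
theorem parab_induction_right {p : (u : W) → u ∈ parab cs J → Prop} (one : p 1 (one_mem _))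
    (mul_simple : ∀ u (hu : u ∈ parab cs J) j (hj : j ∈ J),
      p u hu → p (u * cs.simple j) (mul_mem hu (simple_mem_parab hj)))
    {u : W} (hu : u ∈ parab cs J) : p u hu := by
  induction hu using Subgroup.closure_induction_right with
  | one => exact one
  | mul_right u hu _ hy ih =>
    obtain ⟨j, hj, rfl⟩ := hy
    exact mul_simple u hu j hj ih
  | mul_inv_cancel u hu _ hy ih =>
    obtain ⟨j, hj, rfl⟩ := hy
    simp only [cs.inv_simple]
    exact mul_simple u hu j hj ih

theorem exists_isReduced_of_mem_parab {u : W} (hu : u ∈ parab cs J) :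
    ∃ L : List B, (∀ i ∈ L, i ∈ J) ∧ cs.IsReduced L ∧ u = cs.wordProd L := by
  induction hu using parab_induction_right with
  | one => exact ⟨[], by simp, by simp [CoxeterSystem.IsReduced], by simp⟩
  | mul_simple u _ j hj ih =>
    obtain ⟨L, hLJ, hL, rfl⟩ := ih
    rcases cs.length_mul_simple (cs.wordProd L) j with hlength | hlength
    · refine ⟨L ++ [j], by simpa [or_imp, forall_and] using ⟨hLJ, hj⟩, ?_, ?_⟩
      · simp [CoxeterSystem.IsReduced, cs.wordProd_append, hlength, hL.eq]
      · simp [cs.wordProd_append]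
    · obtain ⟨k, hk, heq⟩ := exists_wordProd_mul_simple_eq_eraseIdx (cs := cs) (ω := L) (j := j)
        (Nat.lt_of_succ_le hlength.le)
      refine ⟨L.eraseIdx k, fun i hi ↦ hLJ i (List.mem_of_mem_eraseIdx hi), ?_, heq⟩
      rw [CoxeterSystem.IsReduced, ← heq, List.length_eraseIdx_of_lt hk, ← hL.eq, ← hlength,
        Nat.add_sub_cancel]

@[elab_as_elim]
theorem parab_reduced_induction_left {p : parab cs J → Prop} (one : p 1)
    (simple_mul : ∀ (i : B) (hi : i ∈ J) (u : parab cs J),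
      cs.length (cs.simple i * u) = cs.length (u : W) + 1 → p u → p (sJ cs J i hi * u))
    (u : parab cs J) : p u := by
  obtain ⟨u, hu⟩ := u
  obtain ⟨L, hLJ, hL, rfl⟩ := exists_isReduced_of_mem_parab hu
  induction L with
  | nil => exact one
  | cons i L ih =>
    rw [List.forall_mem_cons] at hLJ
    have hred : cs.IsReduced L := hL.drop 1
    have hlength : cs.length (cs.simple i * cs.wordProd L) = cs.length (cs.wordProd L) + 1 := by
      rw [← cs.wordProd_cons, hL.eq, hred.eq, List.length_cons]
    simp only [cs.wordProd_cons]
    exact simple_mul i hLJ.1 ⟨_, wordProd_mem_parab hLJ.2⟩ hlength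
      (ih hLJ.2 hred (wordProd_mem_parab hLJ.2))

theorem exists_isRightDescent_of_mem_parab {u : W} (hu : u ∈ parab cs J) (hne : u ≠ 1) :
    ∃ j ∈ J, cs.IsRightDescent u j := by
  obtain ⟨L, hLJ, hL, rfl⟩ := exists_isReduced_of_mem_parab hu
  rcases List.eq_nil_or_concat L with rfl | ⟨L, j, rfl⟩
  · exact absurd cs.wordProd_nil hne
  · refine ⟨j, hLJ j (by simp), ?_⟩
    rw [IsRightDescent, hL.eq, cs.wordProd_concat, cs.simple_mul_simple_cancel_right,
      List.length_concat]
    exact Nat.lt_succ_of_le (cs.length_wordProd_le L)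

theorem IsMinRep.length_mul {w v : W} (hw : IsMinRep cs J w) (hv : v ∈ parab cs J) :
    cs.length (w * v) = cs.length w + cs.length v := by
  induction hv using parab_induction_right with
  | one => simp
  | mul_simple v hv j hj ih =>
    have hdescent : cs.IsRightDescent (w * v) j → cs.IsRightDescent v j := fun h ↦
      (isRightDescent_or_length_mul_conj_lt h).resolve_right
        (hw _ (mul_mem (mul_mem hv (simple_mem_parab hj)) (inv_mem hv))).not_gt
    have hle := cs.length_mul_le w (v * cs.simple j)
    rw [← mul_assoc] at hle ⊢
    rw [IsRightDescent, IsRightDescent] at hdescent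
    have := cs.length_mul_simple (w * v) j
    have := cs.length_mul_simple v j
    lia

theorem length_mul_of_isMinRep_inv {u v : W} (hu : IsMinRep cs J u⁻¹)
    (hv : v ∈ parab cs J) : cs.length (v * u) = cs.length v + cs.length u := by
  rw [← cs.length_inv, mul_inv_rev, hu.length_mul (inv_mem hv), cs.length_inv, cs.length_inv,
    add_comm]

theorem exists_isMinRep_mul_eq (cs : CoxeterSystem M W) (J : Set B) (x : W) :
    ∃ w, IsMinRep cs J w ∧ ∃ v ∈ parab cs J, w * v = x := by
  let v : parab cs J := Function.argmin fun v : parab cs J ↦ cs.length (x * v)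
  refine ⟨x * v, fun a ha ↦ ?_, (v : W)⁻¹, inv_mem v.2, mul_inv_cancel_right x (v : W)⟩
  simpa only [Subgroup.coe_mul, mul_assoc] using
    Function.argmin_le (fun v : parab cs J ↦ cs.length (x * v)) (v * ⟨a, ha⟩)

theorem isMinRep_of_forall_not_isRightDescent {w : W} (h : ∀ j ∈ J, ¬ cs.IsRightDescent w j) :
    IsMinRep cs J w := by
  obtain ⟨w₀, hw₀, v, hv, rfl⟩ := exists_isMinRep_mul_eq cs J w
  by_cases hne : v = 1
  · rwa [hne, mul_one]
  obtain ⟨j, hj, hdescent⟩ := exists_isRightDescent_of_mem_parab hv hne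
  refine absurd ?_ (h j hj)
  rw [IsRightDescent, mul_assoc, hw₀.length_mul (mul_mem hv (simple_mem_parab hj)),
    hw₀.length_mul hv]
  exact Nat.add_lt_add_left hdescent _

theorem IsMinRep.eq_of_mul_eq_mul {w w' v v' : W} (hw : IsMinRep cs J w) (hw' : IsMinRep cs J w')
    (hv : v ∈ parab cs J) (hv' : v' ∈ parab cs J) (h : w * v = w' * v') : w = w' := by
  obtain rfl : w' = w * (v * v'⁻¹) := by rw [← mul_assoc, h, mul_inv_cancel_right]
  have hmem : v * v'⁻¹ ∈ parab cs J := mul_mem hv (inv_mem hv')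
  have hle := hw' _ (inv_mem hmem)
  rw [mul_inv_cancel_right, hw.length_mul hmem] at hle
  have hone : v * v'⁻¹ = 1 := cs.length_eq_zero_iff.1 (by lia)
  rw [hone, mul_one]

/-- Deodhar's lemma. -/
theorem IsMinRep.simple_mul_or_eq_mul_simple {w : W} (hw : IsMinRep cs J w) (i : B) :
    IsMinRep cs J (cs.simple i * w) ∨ ∃ j ∈ J, cs.simple i * w = w * cs.simple j := by
  by_cases h : ∀ j ∈ J, ¬ cs.IsRightDescent (cs.simple i * w) j
  · exact Or.inl (isMinRep_of_forall_not_isRightDescent h)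
  push Not at h
  obtain ⟨j, hj, hdescent⟩ := h
  refine Or.inr ⟨j, hj, ?_⟩
  have hlt := (isRightDescent_or_length_mul_conj_lt hdescent).resolve_left
    (hw _ (simple_mem_parab hj)).not_gt
  rw [cs.length_simple, Nat.lt_one_iff, cs.length_eq_zero_iff, mul_eq_one_iff_eq_inv] at hlt
  rw [hlt]
  simp [mul_assoc]

end Parabolic

/-! ### Special subsets -/

section Special

theorem wSpecial_Iset (w : W) : WSpecial cs J J' δ w (Iset cs J J' δ w) := by
  refine ⟨Set.sUnion_subset fun _ hK ↦ hK.1, ?_⟩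
  rintro k ⟨K, hK, hk⟩
  obtain ⟨j, hjJ, hjK, heq⟩ := hK.2 k hk
  exact ⟨j, hjJ, ⟨K, hK, hjK⟩, heq⟩

/-- For finite `K`, the injection `k ↦ δ⁻¹(w s_k w⁻¹)` of the simple reflections indexed by `K` is
a permutation, so specialness can be tested on its inverse. -/
theorem wSpecial_iff_forall_exists {w : W} {K : Set B} (hK : K.Finite) (hKJ : K ⊆ J) :
    WSpecial cs J J' δ w K ↔ ∀ j (hj : j ∈ K), ∃ k ∈ K,
      w * cs.simple k * w⁻¹ = (δ (sJ cs J j (hKJ hj)) : W) := by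
  let R : Set (parab cs J) := Subtype.val ⁻¹' (cs.simple '' K)
  have hR : R.Finite := (hK.image _).preimage Subtype.val_injective.injOn
  let conjW : parab cs J → W := fun x ↦ w * x * w⁻¹
  let twist : parab cs J → W := fun x ↦ δ x
  have hconjW : Function.Injective conjW := fun x y h ↦ by simpa [conjW] using h
  have htwist : Function.Injective twist := Subtype.val_injective.comp δ.injective
  have hcard : (conjW '' R).ncard = (twist '' R).ncard := by
    rw [Set.ncard_image_of_injective _ hconjW, Set.ncard_image_of_injective _ htwist]
  have hsubset : conjW '' R ⊆ twist '' R ↔ twist '' R ⊆ conjW '' R :=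
    ⟨fun h ↦ (Set.eq_of_subset_of_ncard_le h hcard.ge (hR.image _)).ge,
      fun h ↦ (Set.eq_of_subset_of_ncard_le h hcard.le (hR.image _)).ge⟩
  have hspecial : WSpecial cs J J' δ w K ↔ conjW '' R ⊆ twist '' R := by
    constructor
    · rintro h _ ⟨x, ⟨k, hk, hkx⟩, rfl⟩
      obtain ⟨j, hjJ, hj, heq⟩ := h.2 k hk
      exact ⟨sJ cs J j hjJ, ⟨j, hj, rfl⟩, by simp only [twist, conjW, ← hkx, heq]⟩
    · refine fun h ↦ ⟨hKJ, fun k hk ↦ ?_⟩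
      obtain ⟨x, ⟨j, hj, hjx⟩, heq⟩ := h ⟨sJ cs J k (hKJ hk), ⟨k, hk, rfl⟩, rfl⟩
      obtain rfl : sJ cs J j (hKJ hj) = x := Subtype.ext hjx
      exact ⟨j, hKJ hj, hj, heq.symm⟩
  rw [hspecial, hsubset]
  constructor
  · intro h j hj
    obtain ⟨x, ⟨k, hk, hkx⟩, heq⟩ := h ⟨sJ cs J j (hKJ hj), ⟨j, hj, rfl⟩, rfl⟩
    exact ⟨k, hk, hkx ▸ heq⟩
  · rintro h _ ⟨x, ⟨j, hj, hjx⟩, rfl⟩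
    obtain rfl : sJ cs J j (hKJ hj) = x := Subtype.ext hjx
    obtain ⟨k, hk, heq⟩ := h j hj
    exact ⟨sJ cs J k (hKJ hk), ⟨k, hk, rfl⟩, heq⟩

theorem WSpecial.conj_delta_mem_parab {w : W} {K : Set B} (hK : WSpecial cs J J' δ w K)
    (hfin : K.Finite) {t : parab cs J} (ht : (t : W) ∈ parab cs K) :
    w⁻¹ * (δ t : W) * w ∈ parab cs K := by
  obtain ⟨t, htJ⟩ := t
  change t ∈ parab cs K at ht
  induction ht using parab_induction_right with
  | one =>
    have hone : (⟨1, htJ⟩ : parab cs J) = 1 := rfl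
    simp [hone]
  | mul_simple u hu j hj ih =>
    obtain ⟨k, hk, heq⟩ := (wSpecial_iff_forall_exists hfin hK.1).1 hK j hj
    have huJ : u ∈ parab cs J := parab_mono hK.1 hu
    have hmul : w⁻¹ * (δ ⟨u * cs.simple j, htJ⟩ : W) * w =
        w⁻¹ * (δ ⟨u, huJ⟩ : W) * w * cs.simple k :=
      calc w⁻¹ * (δ ⟨u * cs.simple j, htJ⟩ : W) * w
        _ = w⁻¹ * (δ ⟨u, huJ⟩ * δ (sJ cs J j (hK.1 hj)) : W) * w := by
          rw [← Subgroup.coe_mul, ← map_mul]; rfl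
        _ = w⁻¹ * (δ ⟨u, huJ⟩ : W) * w * cs.simple k := by rw [← heq]; group
    rw [hmul]
    exact mul_mem (ih huJ) (simple_mem_parab hk)

end Special

/-! ### Disjointness -/

section Disjointness

theorem IsMinRep.exists_delta_mul_eq (hδ : MapsSimples cs J J' δ) {w : W} (hw : IsMinRep cs J w)
    (u : parab cs J) : ∃ w', IsMinRep cs J w' ∧ ∃ a ∈ parab cs J, (δ u : W) * w = w' * a ∧
      cs.length a ≤ cs.length (u : W) ∧ (cs.length a = cs.length (u : W) → w' = w) := by
  induction u using parab_reduced_induction_left with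
  | one => exact ⟨w, hw, 1, one_mem _, by simp, le_rfl, fun _ ↦ rfl⟩
  | simple_mul i hi u hlength ih =>
    obtain ⟨w', hw', a, ha, heq, hle, hw'_eq⟩ := ih
    obtain ⟨i', -, hi'⟩ := hδ.1 i hi
    have hmul : (δ (sJ cs J i hi * u) : W) * w = cs.simple i' * w' * a := by
      rw [map_mul, Subgroup.coe_mul, hi', mul_assoc, heq, mul_assoc]
    have hcoe : ((sJ cs J i hi * u : parab cs J) : W) = cs.simple i * u := rfl
    rw [hmul, hcoe, hlength]
    rcases hw'.simple_mul_or_eq_mul_simple i' with hmin | ⟨j, hj, hcomm⟩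
    · exact ⟨_, hmin, a, ha, rfl, by lia, fun h ↦ absurd h (by lia)⟩
    · have hlength_le := cs.length_mul_le (cs.simple j) a
      rw [cs.length_simple] at hlength_le
      exact ⟨w', hw', _, mul_mem (simple_mem_parab hj) ha, by rw [hcomm, mul_assoc], by lia,
        fun h ↦ hw'_eq (by lia)⟩

theorem IsMinRep.length_le_of_delta_mul_eq (hδ : MapsSimples cs J J' δ) {w w' : W}
    (hw : IsMinRep cs J w) (hw' : IsMinRep cs J w') {u : parab cs J} {v v' : W}
    (hv : v ∈ parab cs J) (hv' : v' ∈ parab cs J) (h : (δ u : W) * w * v = w' * v' * u)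
    (hlength : cs.length (v' * u) = cs.length v' + cs.length (u : W)) :
    cs.length v' ≤ cs.length v ∧ (cs.length v ≤ cs.length v' → w' = w) := by
  obtain ⟨w₁, hw₁, a, ha, heq, hle, hw₁_eq⟩ := hw.exists_delta_mul_eq hδ u
  rw [heq, mul_assoc, mul_assoc] at h
  obtain rfl : w₁ = w' := hw₁.eq_of_mul_eq_mul hw' (mul_mem ha hv) (mul_mem hv' u.2) h
  have hsum := cs.length_mul_le a v
  rw [mul_left_cancel h, hlength] at hsum
  exact ⟨by lia, fun h ↦ hw₁_eq (by lia)⟩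

variable (δ) in
/-- The set of those `u ∈ W_J` whose twisted action carries some element of `w W_K` into
`w' W_{K'}`. -/
def transporter (w : W) (K : Set B) (w' : W) (K' : Set B) : Set (parab cs J) :=
  {u | ∃ v ∈ parab cs K, ∃ v' ∈ parab cs K', (δ u : W) * w * v = w' * v' * u}

theorem delta_inv_mul_eq {w w' v v' : W} {u : parab cs J} (h : (δ u : W) * w * v = w' * v' * u) :
    (δ u⁻¹ : W) * w' * v' = w * v * (u⁻¹ : parab cs J) := by
  rw [map_inv, Subgroup.coe_inv, Subgroup.coe_inv, eq_mul_inv_iff_mul_eq, mul_assoc, mul_assoc,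
    inv_mul_eq_iff_eq_mul, ← mul_assoc, ← mul_assoc, h]

theorem inv_mem_transporter {w w' : W} {K K' : Set B} {u : parab cs J}
    (hu : u ∈ transporter δ w K w' K') : u⁻¹ ∈ transporter δ w' K' w K := by
  obtain ⟨v, hv, v', hv', h⟩ := hu
  exact ⟨v', hv', v, hv, delta_inv_mul_eq h⟩

theorem mul_mem_transporter {w w' : W} {K K' : Set B} (hK : WSpecial cs J J' δ w K)
    (hfin : K.Finite) {u t : parab cs J} (hu : u ∈ transporter δ w K w' K')
    (ht : (t : W) ∈ parab cs K) : u * t ∈ transporter δ w K w' K' := by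
  obtain ⟨v, hv, v', hv', h⟩ := hu
  refine ⟨(w⁻¹ * (δ t : W) * w)⁻¹ * v * t,
    mul_mem (mul_mem (inv_mem (hK.conj_delta_mem_parab hfin ht)) hv) ht, v', hv', ?_⟩
  rw [Subgroup.coe_mul, ← mul_assoc (w' * v'), ← h, map_mul, Subgroup.coe_mul]
  group

theorem isMinRep_of_mem_transporter_of_length_le {w w' : W} {K K' : Set B}
    (hK : WSpecial cs J J' δ w K) (hfin : K.Finite) {u : parab cs J}
    (hu : u ∈ transporter δ w K w' K')
    (hmin : ∀ a ∈ transporter δ w K w' K', cs.length (u : W) ≤ cs.length (a : W)) :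
    IsMinRep cs K (u : W) := fun t ht ↦
  hmin _ (mul_mem_transporter hK hfin (t := ⟨t, parab_mono hK.1 ht⟩) hu ht)

theorem IsMinRep.eq_of_transporter_nonempty (hδ : MapsSimples cs J J' δ) {w w' : W}
    {K K' : Set B} (hw : IsMinRep cs J w) (hw' : IsMinRep cs J w') (hK : WSpecial cs J J' δ w K)
    (hK' : WSpecial cs J J' δ w' K') (hfin : K.Finite) (hfin' : K'.Finite)
    (hne : (transporter δ w K w' K').Nonempty) : w = w' := by
  obtain ⟨u, hu, hmin⟩ :=
    exists_minimalFor_of_wellFoundedLT _ (fun u : parab cs J ↦ cs.length (u : W)) hne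
  replace hmin : ∀ a ∈ transporter δ w K w' K', cs.length (u : W) ≤ cs.length (a : W) :=
    fun a ha ↦ (le_total _ _).elim id (hmin ha)
  have hmin' : ∀ a ∈ transporter δ w' K' w K,
      cs.length ((u⁻¹ : parab cs J) : W) ≤ cs.length (a : W) := fun a ha ↦ by
    simpa using hmin a⁻¹ (inv_mem_transporter ha)
  have hright : IsMinRep cs K (u : W) := isMinRep_of_mem_transporter_of_length_le hK hfin hu hmin
  have hleft : IsMinRep cs K' ((u⁻¹ : parab cs J) : W) :=
    isMinRep_of_mem_transporter_of_length_le hK' hfin' (inv_mem_transporter hu) hmin'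
  obtain ⟨v, hv, v', hv', h⟩ := hu
  have hvJ : v ∈ parab cs J := parab_mono hK.1 hv
  have hv'J : v' ∈ parab cs J := parab_mono hK'.1 hv'
  have hle := (hw'.length_le_of_delta_mul_eq hδ hw hv'J hvJ (delta_inv_mul_eq h)
    (length_mul_of_isMinRep_inv (by simpa using hright) hv)).1
  exact ((hw.length_le_of_delta_mul_eq hδ hw' hvJ hv'J h
    (length_mul_of_isMinRep_inv hleft hv')).2 hle).symm

theorem transporter_nonempty {w w' x : W} (hx : x ∈ orbSet cs J J' δ (coset cs J J' δ w))
    (hx' : x ∈ orbSet cs J J' δ (coset cs J J' δ w')) :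
    (transporter δ w (Iset cs J J' δ w) w' (Iset cs J J' δ w')).Nonempty := by
  obtain ⟨a, _, ⟨v, hv, rfl⟩, rfl⟩ := hx
  obtain ⟨b, _, ⟨v', hv', rfl⟩, heq⟩ := hx'
  refine ⟨b⁻¹ * a, v, hv, v', hv', ?_⟩
  rw [map_mul, map_inv, Subgroup.coe_mul, Subgroup.coe_mul, Subgroup.coe_inv, Subgroup.coe_inv]
  rw [mul_inv_eq_iff_eq_mul] at heq
  rw [mul_assoc, mul_assoc, inv_mul_eq_iff_eq_mul, heq]
  group

end Disjointness

/-! ### Covering -/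

section Covering

theorem delta_mul_mul_inv_mem_orbSet {V : Set W} {y : W} (hy : y ∈ orbSet cs J J' δ V)
    (u : parab cs J) : (δ u : W) * y * (u : W)⁻¹ ∈ orbSet cs J J' δ V := by
  obtain ⟨a, v, hv, rfl⟩ := hy
  exact ⟨u * a, v, hv, by simp [mul_assoc]⟩

theorem self_mem_orbitOf (x : W) : x ∈ orbitOf cs J J' δ x :=
  ⟨1, x, rfl, by simp⟩

theorem mem_orbSet_of_mem_orbitOf {V : Set W} {x y : W} (hy : y ∈ orbitOf cs J J' δ x)
    (hyV : y ∈ V) : x ∈ orbSet cs J J' δ V := by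
  obtain ⟨u, _, rfl, rfl⟩ := hy
  exact ⟨u⁻¹, _, hyV, by simp [mul_assoc]⟩

variable (δ) in
/-- The pair `(w, L)` of a minimal coset representative `w ∈ W^J` and a word `L` in `J` represents
an element `w s_{i₁} ⋯ s_{iₙ}` of the orbit of `x`. -/
def IsOrbitWord (x : W) (p : W × List B) : Prop :=
  IsMinRep cs J p.1 ∧ (∀ i ∈ p.2, i ∈ J) ∧ p.1 * cs.wordProd p.2 ∈ orbitOf cs J J' δ x

variable (δ) in
/-- The word `L` is shortest possible among all orbit words `(w, L)` of `x`, with `w` varying. -/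
def IsShortestOrbitWord (x w : W) (L : List B) : Prop :=
  MinimalFor (IsOrbitWord δ x) (fun p ↦ p.2.length) (w, L)

theorem exists_isShortestOrbitWord (x : W) : ∃ w L, IsShortestOrbitWord δ x w L := by
  obtain ⟨w, hw, v, hv, rfl⟩ := exists_isMinRep_mul_eq cs J x
  obtain ⟨L, hLJ, -, rfl⟩ := exists_isReduced_of_mem_parab hv
  obtain ⟨⟨w', L'⟩, h⟩ := exists_minimalFor_of_wellFoundedLT (IsOrbitWord δ (w * cs.wordProd L))
    (fun p ↦ p.2.length) ⟨(w, L), hw, hLJ, self_mem_orbitOf _⟩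
  exact ⟨w', L', h⟩

theorem IsShortestOrbitWord.rotate (hδ : MapsSimples cs J J' δ) {x w : W} {L : List B} {i : B}
    (hi : i ∈ J) (h : IsShortestOrbitWord δ x w (L ++ [i])) :
    ∃ j, w * cs.simple j * w⁻¹ = (δ (sJ cs J i hi) : W) ∧ IsShortestOrbitWord δ x w (j :: L) := by
  obtain ⟨⟨hw, hLJ, horbit⟩, hshortest⟩ := h
  obtain ⟨i', -, hi'⟩ := hδ.1 i hi
  replace hLJ : ∀ k ∈ L, k ∈ J := fun k hk ↦ hLJ k (List.mem_append_left _ hk)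
  have hrotate : cs.simple i' * w * cs.wordProd L ∈ orbitOf cs J J' δ x := by
    have hconj : (δ (sJ cs J i hi) : W) * (w * cs.wordProd (L ++ [i])) * (cs.simple i)⁻¹ ∈
        orbitOf cs J J' δ x := delta_mul_mul_inv_mem_orbSet horbit (sJ cs J i hi)
    rw [hi'] at hconj
    simpa [cs.wordProd_append, mul_assoc] using hconj
  rcases hw.simple_mul_or_eq_mul_simple i' with hmin | ⟨j, hj, hcomm⟩
  · have hlength := hshortest (j := (cs.simple i' * w, L)) ⟨hmin, hLJ, hrotate⟩ (by simp)
    simp at hlength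
  · refine ⟨j, by rw [hi', ← hcomm, mul_inv_cancel_right], ⟨hw, ?_, ?_⟩, ?_⟩
    · exact List.forall_mem_cons.2 ⟨hj, hLJ⟩
    · rwa [cs.wordProd_cons, ← mul_assoc, ← hcomm]
    · simpa using hshortest

theorem IsShortestOrbitWord.exists_append_singleton (hδ : MapsSimples cs J J' δ) {x w : W}
    {L : List B} {i : B} (h : IsShortestOrbitWord δ x w L) (hi : i ∈ L) :
    ∃ L', IsShortestOrbitWord δ x w (L' ++ [i]) := by
  obtain ⟨L₁, L₂, rfl⟩ := List.append_of_mem hi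
  clear hi
  induction L₂ using List.reverseRecOn generalizing L₁ with
  | nil => exact ⟨L₁, h⟩
  | append_singleton L₂ k ih =>
    have hk : k ∈ J := h.1.2.1 k (by simp)
    rw [← List.cons_append, ← List.append_assoc] at h
    obtain ⟨j, -, hj⟩ := h.rotate hδ hk
    exact ih (j :: L₁) hj

theorem wSpecial_setOf_isShortestOrbitWord (hJ : J.Finite) (hδ : MapsSimples cs J J' δ) (x w : W) :
    WSpecial cs J J' δ w {i | ∃ L, IsShortestOrbitWord δ x w L ∧ i ∈ L} := by
  have hKJ : {i | ∃ L, IsShortestOrbitWord δ x w L ∧ i ∈ L} ⊆ J := fun i ⟨_, hL, hi⟩ ↦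
    hL.1.2.1 i hi
  refine (wSpecial_iff_forall_exists (hJ.subset hKJ) hKJ).2 fun i hi ↦ ?_
  obtain ⟨L, hL, hiL⟩ := hi
  obtain ⟨L', hL'⟩ := hL.exists_append_singleton hδ hiL
  obtain ⟨k, hk, hrotate⟩ := hL'.rotate hδ (hKJ ⟨L, hL, hiL⟩)
  exact ⟨k, ⟨_, hrotate, List.mem_cons_self⟩, hk⟩

theorem exists_isMinRep_mem_orbSet_coset (hJ : J.Finite) (hδ : MapsSimples cs J J' δ) (x : W) :
    ∃ w, IsMinRep cs J w ∧ x ∈ orbSet cs J J' δ (coset cs J J' δ w) := by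
  obtain ⟨w, L, hL⟩ := exists_isShortestOrbitWord (δ := δ) x
  have hLI : ∀ i ∈ L, i ∈ Iset cs J J' δ w := fun i hi ↦
    ⟨_, wSpecial_setOf_isShortestOrbitWord hJ hδ x w, L, hL, hi⟩
  exact ⟨w, hL.1.1, mem_orbSet_of_mem_orbitOf hL.1.2.2 ⟨_, wordProd_mem_parab hLI, rfl⟩⟩

end Covering

theorem stmt1_general (hJ : J.Finite) (hδ : MapsSimples cs J J' δ) :
    (∀ x : W, ∃ w : W, IsMinRep cs J w ∧
      x ∈ orbSet cs J J' δ (coset cs J J' δ w)) ∧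
    (∀ w w' : W, IsMinRep cs J w → IsMinRep cs J w' → w ≠ w' →
      ∀ x : W, x ∈ orbSet cs J J' δ (coset cs J J' δ w) →
        x ∉ orbSet cs J J' δ (coset cs J J' δ w')) := by
  refine ⟨exists_isMinRep_mem_orbSet_coset hJ hδ, fun w w' hw hw' hne x hx hx' ↦ hne ?_⟩
  have hI (w : W) : WSpecial cs J J' δ w (Iset cs J J' δ w) := wSpecial_Iset w
  exact hw.eq_of_transporter_nonempty hδ hw' (hI w) (hI w') (hJ.subset (hI w).1)
    (hJ.subset (hI w').1) (transporter_nonempty hx hx')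

end

/-- `W` is the disjoint union of the sets
`W_J ·_δ (w W_{I(J,w,δ)})` over `w ∈ W^J`. -/
theorem stmt1 (hδ : MapsSimples cs J J' δ) :
    (∀ x : W, ∃ w : W, IsMinRep cs J w ∧
      x ∈ orbSet cs J J' δ (coset cs J J' δ w)) ∧
    (∀ w w' : W, IsMinRep cs J w → IsMinRep cs J w' → w ≠ w' →
      ∀ x : W, x ∈ orbSet cs J J' δ (coset cs J J' δ w) →
        x ∉ orbSet cs J J' δ (coset cs J J' δ w')) := by
  exact stmt1_general J.toFinite hδ

end PartialConjugation
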